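/- arXiv:1901.06295 — 3 statements merged into one kernel-verified Lean document; each statement's English description precedes it below -/
import Mathlib

section
/- Let R be a monic polynomial in F_q[T] and A, B polynomials. Then the sum over primitive Dirichlet characters χ modulo R of χ(A)·conj(χ)(B) equals ∑_{EF=R, F | (A-B)} μ(E)φ(F) if gcd(AB, R) = 1, and equals 0 otherwise. -/
open Polynomial UniqueFactorizationMonoid
open scoped Classical

/-- The Möbius function on `F_q[T]`. -/
noncomputable def ffMu {Fq : Type*} [Field Fq] (E : Polynomial Fq) : ℤ :=
  if Squarefree E then (-1) ^ (normalizedFactors E).toFinset.card else 0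

/-- The Euler totient on `F_q[T]`. -/
noncomputable def ffPhi {Fq : Type*} [Field Fq] (R : Polynomial Fq) : ℕ :=
  if R.natDegree = 0 then 1
  else Nat.card {A : Polynomial Fq // A.degree < R.degree ∧ IsCoprime A R}

/-- A Dirichlet character on `F_q[T]` of modulus `R`. -/
structure FFChar (Fq : Type*) [Field Fq] (R : Polynomial Fq) where
  toFun : Polynomial Fq → ℂ
  map_mul' : ∀ A B, toFun (A * B) = toFun A * toFun B
  periodic' : ∀ A B, R ∣ (A - B) → toFun A = toFun B
  eq_zero_iff' : ∀ A, toFun A = 0 ↔ ¬ IsCoprime A R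

/-- `S` is an induced modulus of `χ`. -/
def FFChar.IsInducedBy {Fq : Type*} [Field Fq] {R : Polynomial Fq}
    (χ : FFChar Fq R) (S : Polynomial Fq) : Prop :=
  S.Monic ∧ S ∣ R ∧ ∃ χ₁ : FFChar Fq S, ∀ A, IsCoprime A R → χ.toFun A = χ₁.toFun A

/-- `χ` is primitive: it has no induced modulus of strictly smaller norm. -/
def FFChar.IsPrimitive {Fq : Type*} [Field Fq] {R : Polynomial Fq}
    (χ : FFChar Fq R) : Prop :=
  ∀ S : Polynomial Fq, χ.IsInducedBy S → R.natDegree ≤ S.natDegree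

/-!
The polynomials `F` such that `χ` is trivial on the units `A ≡ 1 mod F` form an ideal; its monic
generator is the conductor of `χ`, so `χ` is induced from a divisor `F` of `R` exactly when the
conductor divides `F`. Since `∑_{E ∣ N} μ(E)` detects whether `N` is a unit, taking `N` to be the
cofactor of the conductor in `R` gives
`∑_{E ∣ R, cond χ ∣ R / E} μ(E) = 1` if `χ` is primitive and `0` otherwise.
Inserting this and exchanging the sums leaves, for each `E`, the sum over the characters induced
from `R / E`, which is evaluated by orthogonality modulo `R / E`.
-/

section Möbius

theorem normalizedFactors_prod_of_subset {α : Type*} [CommMonoidWithZero α] [DecidableEq α]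
    [NormalizationMonoid α] [UniqueFactorizationMonoid α] {a : α} {s : Finset α}
    (hs : s ⊆ (normalizedFactors a).toFinset) : normalizedFactors (∏ p ∈ s, p) = s.val := by
  have hmem (p : α) (hp : p ∈ s) : p ∈ normalizedFactors a := Multiset.mem_toFinset.1 (hs hp)
  rw [Finset.prod_eq_multiset_prod, Multiset.map_id', normalizedFactors_prod_eq s.val
    fun p hp => irreducible_of_normalized_factor p (hmem p hp)]
  exact (Multiset.map_congr rfl fun p hp => normalize_normalized_factor p (hmem p hp)).trans
    (Multiset.map_id' _)

variable {Fq : Type*} [Field Fq]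

/-- The monic divisors of a nonzero polynomial `N`, i.e. the products of its sub-multisets of monic
irreducible factors. The value at `N = 0` is junk. -/
noncomputable def monicDivisors (N : Polynomial Fq) : Finset (Polynomial Fq) :=
  ((normalizedFactors N).powerset.map Multiset.prod).toFinset

theorem monic_of_mem_normalizedFactors {N p : Polynomial Fq} (hp : p ∈ normalizedFactors N) :
    p.Monic :=
  normalize_normalized_factor p hp ▸ monic_normalize (ne_zero_of_mem_normalizedFactors hp)

theorem prod_normalizedFactors_of_monic {N : Polynomial Fq} (hN : N.Monic) :
    (normalizedFactors N).prod = N := by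
  rw [prod_normalizedFactors_eq hN.ne_zero, hN.normalize_eq_self]

theorem mem_monicDivisors {N : Polynomial Fq} (hN : N ≠ 0) {E : Polynomial Fq} :
    E ∈ monicDivisors N ↔ E.Monic ∧ E ∣ N := by
  simp only [monicDivisors, Multiset.mem_toFinset, Multiset.mem_map, Multiset.mem_powerset]
  constructor
  · rintro ⟨s, hs, rfl⟩
    have hmonic : (s.map id).prod.Monic := monic_multiset_prod_of_monic s id fun p hp =>
      monic_of_mem_normalizedFactors (Multiset.mem_of_le hs hp)
    rw [Multiset.map_id] at hmonic
    exact ⟨hmonic,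
      (Multiset.prod_dvd_prod_of_le hs).trans (prod_normalizedFactors hN).dvd⟩
  · rintro ⟨hE, hEN⟩
    exact ⟨normalizedFactors E,
      (dvd_iff_normalizedFactors_le_normalizedFactors hE.ne_zero hN).1 hEN,
      prod_normalizedFactors_of_monic hE⟩

theorem monic_prod_of_subset_normalizedFactors {N : Polynomial Fq} {s : Finset (Polynomial Fq)}
    (hs : s ⊆ (normalizedFactors N).toFinset) : (∏ p ∈ s, p).Monic :=
  monic_prod_of_monic _ _ fun _ hp =>
    monic_of_mem_normalizedFactors (Multiset.mem_toFinset.1 (hs hp))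

theorem sum_squarefree_monicDivisors {K : Type*} [AddCommMonoid K] {N : Polynomial Fq}
    (hN : N ≠ 0) (f : Finset (Polynomial Fq) → K) :
    ∑ E ∈ monicDivisors N with Squarefree E, f (normalizedFactors E).toFinset
      = ∑ s ∈ (normalizedFactors N).toFinset.powerset, f s := by
  refine Finset.sum_nbij' (fun E => (normalizedFactors E).toFinset) (fun s => ∏ p ∈ s, p)
    ?_ ?_ ?_ ?_ fun _ _ => rfl
  · intro E hE
    rw [Finset.mem_filter, mem_monicDivisors hN] at hE
    rw [Finset.mem_powerset, Multiset.toFinset_subset]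
    exact Multiset.subset_of_le
      ((dvd_iff_normalizedFactors_le_normalizedFactors hE.1.1.ne_zero hN).1 hE.1.2)
  · intro s hs
    rw [Finset.mem_powerset] at hs
    have hmonic := monic_prod_of_subset_normalizedFactors hs
    rw [Finset.mem_filter, mem_monicDivisors hN,
      squarefree_iff_nodup_normalizedFactors hmonic.ne_zero,
      dvd_iff_normalizedFactors_le_normalizedFactors hmonic.ne_zero hN,
      normalizedFactors_prod_of_subset hs, Multiset.le_iff_subset s.nodup]
    exact ⟨⟨hmonic, fun p hp => Multiset.mem_toFinset.1 (hs hp)⟩, s.nodup⟩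
  · intro E hE
    rw [Finset.mem_filter, mem_monicDivisors hN] at hE
    have hnodup := (squarefree_iff_nodup_normalizedFactors hE.1.1.ne_zero).1 hE.2
    rw [Finset.prod_eq_multiset_prod, Multiset.map_id', Multiset.toFinset_val, hnodup.dedup,
      prod_normalizedFactors_of_monic hE.1.1]
  · intro s hs
    simp only [normalizedFactors_prod_of_subset (Finset.mem_powerset.1 hs), Finset.val_toFinset]

theorem sum_ffMu_monicDivisors {N : Polynomial Fq} (hN : N ≠ 0) :
    ∑ E ∈ monicDivisors N, ffMu E = if IsUnit N then 1 else 0 := by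
  simp only [ffMu, ← Finset.sum_filter, sum_squarefree_monicDivisors hN fun s => (-1 : ℤ) ^ s.card,
    Finset.sum_powerset_neg_one_pow_card, Multiset.toFinset_eq_empty,
    normalizedFactors_eq_zero_iff hN]

end Möbius

section Quotient

theorem dvd_div_iff_mul_dvd {α : Type*} [EuclideanDomain α] {a b c : α} (hb : b ≠ 0)
    (hbc : b ∣ c) : a ∣ c / b ↔ b * a ∣ c := by
  refine ⟨fun h => ?_, EuclideanDomain.dvd_div_of_mul_dvd⟩
  rw [← EuclideanDomain.mul_div_cancel' hb hbc]
  exact mul_dvd_mul_left b h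

-- The witness `t` is the product of the prime factors of `c` not dividing `a`.
theorem exists_isCoprime_add_mul {α : Type*} [CommRing α] [IsDomain α] [IsPrincipalIdealRing α]
    {a b c : α} (hc : c ≠ 0) (h : ∀ p, Prime p → p ∣ a → p ∣ b → ¬ p ∣ c) :
    ∃ t, IsCoprime (a + b * t) c := by
  refine ⟨∏ p ∈ (factors c).toFinset with ¬ p ∣ a, p, ?_⟩
  refine isCoprime_of_prime_dvd (fun h0 => hc h0.2) fun q hq hqab hqc => ?_
  obtain ⟨p, hp, hqp⟩ := exists_mem_factors_of_dvd hc hq.irreducible hqc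
  have hpprime := prime_of_factor p hp
  have hpab := hqp.dvd_iff_dvd_left.1 hqab
  by_cases hpa : p ∣ a
  · rcases hpprime.dvd_or_dvd ((dvd_add_right hpa).1 hpab) with hpb | hpt
    · exact h p hpprime hpa hpb (dvd_of_mem_factors hp)
    · obtain ⟨r, hr, hpr⟩ := (hpprime.dvd_finsetProd_iff _).1 hpt
      rw [Finset.mem_filter, Multiset.mem_toFinset] at hr
      exact hr.2 ((hpprime.associated_of_dvd (prime_of_factor r hr.1) hpr).symm.dvd.trans hpa)
  · have hpt : p ∣ ∏ p ∈ (factors c).toFinset with ¬ p ∣ a, p :=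
      Finset.dvd_prod_of_mem (fun x => x)
        (Finset.mem_filter.2 ⟨Multiset.mem_toFinset.2 hp, hpa⟩)
    exact hpa ((dvd_add_left (hpt.mul_left b)).1 hpab)

theorem isUnit_adjoinRoot_mk_iff {R : Type*} [CommRing R] {F A : Polynomial R} :
    IsUnit (AdjoinRoot.mk F A) ↔ IsCoprime A F := by
  rw [isUnit_iff_exists_inv, AdjoinRoot.mk_surjective.exists]
  simp only [← map_mul, ← map_one (AdjoinRoot.mk F), AdjoinRoot.mk_eq_mk]
  constructor
  · rintro ⟨B, c, hc⟩
    exact ⟨B, -c, by linear_combination hc⟩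
  · rintro ⟨u, v, huv⟩
    exact ⟨u, -v, by linear_combination huv⟩

theorem isCoprime_congr {R : Type*} [CommRing R] {F A B : Polynomial R} (h : F ∣ A - B) :
    IsCoprime A F ↔ IsCoprime B F := by
  rw [← isUnit_adjoinRoot_mk_iff, ← isUnit_adjoinRoot_mk_iff, AdjoinRoot.mk_eq_mk.2 h]

theorem algHomOfDvd_mk {R : Type*} [CommRing R] {F G : Polynomial R} (h : G ∣ F)
    (A : Polynomial R) :
    AdjoinRoot.algHomOfDvd R F G h (AdjoinRoot.mk F A) = AdjoinRoot.mk G A := by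
  rw [← AdjoinRoot.aeval_eq, ← AdjoinRoot.aeval_eq, ← Polynomial.aeval_algHom_apply,
    AdjoinRoot.algHomOfDvd_root]

variable {Fq : Type*} [Field Fq]

theorem exists_isCoprime_dvd_sub {F R A : Polynomial Fq} (hR : R ≠ 0) (hA : IsCoprime A F) :
    ∃ A', IsCoprime A' R ∧ F ∣ A' - A := by
  obtain ⟨t, ht⟩ := exists_isCoprime_add_mul (a := A) (b := F) hR
    fun p hp hpA hpF => (hp.not_isUnit (hA.isUnit_of_dvd' hpA hpF)).elim
  exact ⟨A + F * t, ht, t, by ring⟩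

theorem units_map_algHomOfDvd_surjective {F R : Polynomial Fq} (hR : R ≠ 0) (hFR : F ∣ R) :
    Function.Surjective
      (Units.map (AdjoinRoot.algHomOfDvd Fq R F hFR : AdjoinRoot R →* AdjoinRoot F)) := by
  intro u
  obtain ⟨A, hA⟩ := AdjoinRoot.mk_surjective (u : AdjoinRoot F)
  obtain ⟨A', hA', hsub⟩ :=
    exists_isCoprime_dvd_sub hR (isUnit_adjoinRoot_mk_iff.1 (hA ▸ u.isUnit))
  refine ⟨(isUnit_adjoinRoot_mk_iff.2 hA').unit, Units.ext ?_⟩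
  rw [Units.coe_map, IsUnit.unit_spec, ← hA, ← AdjoinRoot.mk_eq_mk.2 hsub]
  exact algHomOfDvd_mk hFR A'

theorem finite_adjoinRoot [Finite Fq] {F : Polynomial Fq} (hF : F ≠ 0) :
    Finite (AdjoinRoot F) :=
  have := (AdjoinRoot.powerBasis hF).finite
  Module.finite_of_finite Fq

theorem card_units_adjoinRoot {F : Polynomial Fq} (hF : F ≠ 0) :
    Nat.card (AdjoinRoot F)ˣ
      = Nat.card {A : Polynomial Fq // A.degree < F.degree ∧ IsCoprime A F} := by
  symm
  refine Nat.card_congr (Equiv.ofBijective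
    (fun A => (isUnit_adjoinRoot_mk_iff.2 A.2.2).unit) ⟨?_, ?_⟩)
  · rintro ⟨A, hA, _⟩ ⟨B, hB, _⟩ hAB
    have hdvd : F ∣ A - B := AdjoinRoot.mk_eq_mk.1 (congrArg Units.val hAB)
    have hdeg : (A - B).degree < F.degree := (degree_sub_le A B).trans_lt (max_lt hA hB)
    exact Subtype.ext (sub_eq_zero.1 (eq_zero_of_dvd_of_degree_lt hdvd hdeg))
  · intro u
    obtain ⟨A, hA⟩ := AdjoinRoot.mk_surjective (u : AdjoinRoot F)
    have hmod : AdjoinRoot.mk F (A % F) = u := by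
      rw [← hA, AdjoinRoot.mk_eq_mk]
      exact ⟨-(A / F), by linear_combination EuclideanDomain.mod_add_div A F⟩
    exact ⟨⟨A % F, degree_mod_lt A hF, isUnit_adjoinRoot_mk_iff.1 (hmod ▸ u.isUnit)⟩,
      Units.ext hmod⟩

theorem ffPhi_eq_card_units {F : Polynomial Fq} (hF : F ≠ 0) :
    ffPhi F = Nat.card (AdjoinRoot F)ˣ := by
  unfold ffPhi
  split_ifs with hdeg
  · have hunit : IsUnit F := isUnit_iff_degree_eq_zero.2 ((degree_eq_iff_natDegree_eq hF).2 hdeg)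
    have : Subsingleton (AdjoinRoot F) := subsingleton_of_zero_eq_one <| by
      rw [← map_zero (AdjoinRoot.mk F), ← map_one (AdjoinRoot.mk F), AdjoinRoot.mk_eq_mk]
      exact hunit.dvd
    exact Nat.card_unique.symm
  · exact (card_units_adjoinRoot hF).symm

end Quotient

section Orthogonality

theorem sum_mulChar_apply (M : Type*) [CommMonoid M] [Finite M] (K : Type*) [CommRing K]
    [IsDomain K] [HasEnoughRootsOfUnity K (Monoid.exponent Mˣ)] [Fintype (MulChar M K)] (a : M) :
    ∑ χ : MulChar M K, χ a = if a = 1 then (Nat.card Mˣ : K) else 0 := by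
  split_ifs with ha
  · simp only [ha, map_one, Finset.sum_const, Finset.card_univ, nsmul_one,
      ← MulChar.card_eq_card_units_of_hasEnoughRootsOfUnity M K, Nat.card_eq_fintype_card]
  · obtain ⟨χ, hχ⟩ := MulChar.exists_apply_ne_one_of_hasEnoughRootsOfUnity M K ha
    refine eq_zero_of_mul_eq_self_left hχ ?_
    simp only [Finset.mul_sum, ← MulChar.mul_apply]
    exact Fintype.sum_bijective _ (Group.mulLeft_bijective χ) _ _ fun _ => rfl

theorem sum_mulChar_mul_conj {M : Type*} [CommRing M] [Finite M] [Fintype (MulChar M ℂ)]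
    (a : M) {b : M} (hb : IsUnit b) :
    ∑ χ : MulChar M ℂ, χ a * (starRingEnd ℂ) (χ b) = if a = b then (Nat.card Mˣ : ℂ) else 0 := by
  obtain ⟨b, rfl⟩ := hb
  have hconj (χ : MulChar M ℂ) : χ a * (starRingEnd ℂ) (χ b) = χ (a * ↑b⁻¹) := by
    rw [starRingEnd_apply, MulChar.star_apply', MulChar.inv_apply, Ring.inverse_unit, map_mul]
  simp only [hconj, sum_mulChar_apply, Units.mul_inv_eq_one]

end Orthogonality

namespace FFChar

variable {Fq : Type*} [Field Fq] {R F : Polynomial Fq}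

attribute [ext] FFChar

protected theorem map_one (χ : FFChar Fq R) : χ.toFun 1 = 1 := by
  have hne : χ.toFun 1 ≠ 0 := fun h0 => (χ.eq_zero_iff' 1).1 h0 isCoprime_one_left
  exact mul_right_cancel₀ hne (by rw [one_mul, ← χ.map_mul', one_mul])

theorem extend_mk_apply (χ : FFChar Fq R) (A : Polynomial Fq) :
    Function.extend (AdjoinRoot.mk R) χ.toFun 0 (AdjoinRoot.mk R A) = χ.toFun A :=
  Function.FactorsThrough.extend_apply
    (fun A B hAB => χ.periodic' A B (AdjoinRoot.mk_eq_mk.1 hAB)) 0 A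

/-- Dirichlet characters modulo `R` are the multiplicative characters of `Fq[T] / (R)`. -/
noncomputable def mulCharEquiv (R : Polynomial Fq) : FFChar Fq R ≃ MulChar (AdjoinRoot R) ℂ where
  toFun χ :=
    { toFun := Function.extend (AdjoinRoot.mk R) χ.toFun 0
      map_one' := by rw [← map_one (AdjoinRoot.mk R), χ.extend_mk_apply, χ.map_one]
      map_mul' := AdjoinRoot.mk_surjective.forall₂.2 fun A B => by
        simp only [← map_mul, χ.extend_mk_apply, χ.map_mul']
      map_nonunit' := AdjoinRoot.mk_surjective.forall.2 fun A hA => by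
        rw [isUnit_adjoinRoot_mk_iff] at hA
        exact (χ.extend_mk_apply A).trans ((χ.eq_zero_iff' A).2 hA) }
  invFun ψ :=
    { toFun := fun A => ψ (AdjoinRoot.mk R A)
      map_mul' := fun A B => by rw [map_mul, map_mul]
      periodic' := fun A B h => by rw [AdjoinRoot.mk_eq_mk.2 h]
      eq_zero_iff' := fun A => by rw [← isUnit_adjoinRoot_mk_iff, MulChar.apply_eq_zero_iff] }
  left_inv χ := FFChar.ext (funext χ.extend_mk_apply)
  right_inv _ := MulChar.ext' (AdjoinRoot.mk_surjective.forall.2 fun A => extend_mk_apply _ A)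

theorem mulCharEquiv_symm_apply (ψ : MulChar (AdjoinRoot R) ℂ) (A : Polynomial Fq) :
    ((mulCharEquiv R).symm ψ).toFun A = ψ (AdjoinRoot.mk R A) :=
  rfl

theorem mulCharEquiv_mk (χ : FFChar Fq R) (A : Polynomial Fq) :
    mulCharEquiv R χ (AdjoinRoot.mk R A) = χ.toFun A := by
  rw [← mulCharEquiv_symm_apply, Equiv.symm_apply_apply]

protected theorem finite [Finite Fq] (hR : R ≠ 0) : Finite (FFChar Fq R) :=
  have := finite_adjoinRoot hR
  Finite.of_equiv _ (mulCharEquiv R).symm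

theorem sum_mul_conj [Finite Fq] (hR : R ≠ 0) [Fintype (FFChar Fq R)] (A : Polynomial Fq)
    {B : Polynomial Fq} (hB : IsCoprime B R) :
    ∑ χ : FFChar Fq R, χ.toFun A * (starRingEnd ℂ) (χ.toFun B)
      = if R ∣ A - B then (ffPhi R : ℂ) else 0 := by
  have := finite_adjoinRoot hR
  have : Fintype (MulChar (AdjoinRoot R) ℂ) := Fintype.ofFinite _
  simp only [ffPhi_eq_card_units hR, ← AdjoinRoot.mk_eq_mk,
    ← sum_mulChar_mul_conj _ (isUnit_adjoinRoot_mk_iff.2 hB), ← mulCharEquiv_mk,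
    (mulCharEquiv R).sum_comp
      fun ψ => ψ (AdjoinRoot.mk R A) * (starRingEnd ℂ) (ψ (AdjoinRoot.mk R B))]

/-- The character modulo `R` induced by a character modulo a divisor `F` of `R`. -/
noncomputable def changeLevel (hFR : F ∣ R) (ψ : FFChar Fq F) : FFChar Fq R where
  toFun A := if IsCoprime A R then ψ.toFun A else 0
  map_mul' A B := by
    by_cases hA : IsCoprime A R <;> by_cases hB : IsCoprime B R <;>
      simp [IsCoprime.mul_left_iff, hA, hB, ψ.map_mul']
  periodic' A B h := by simp only [ψ.periodic' A B (hFR.trans h), isCoprime_congr h]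
  eq_zero_iff' A := by
    by_cases hA : IsCoprime A R
    · simp [hA, ψ.eq_zero_iff', hA.of_isCoprime_of_dvd_right hFR]
    · simp [hA]

theorem changeLevel_apply (hFR : F ∣ R) (ψ : FFChar Fq F) {A : Polynomial Fq}
    (hA : IsCoprime A R) : (changeLevel hFR ψ).toFun A = ψ.toFun A :=
  if_pos hA

theorem changeLevel_eq_iff (hFR : F ∣ R) {ψ : FFChar Fq F} {χ : FFChar Fq R} :
    changeLevel hFR ψ = χ ↔ ∀ A, IsCoprime A R → χ.toFun A = ψ.toFun A := by
  refine ⟨fun h A hA => h ▸ changeLevel_apply hFR ψ hA, fun h => ?_⟩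
  ext A
  by_cases hA : IsCoprime A R
  · rw [changeLevel_apply hFR ψ hA, h A hA]
  · rw [(χ.eq_zero_iff' A).2 hA, ((changeLevel hFR ψ).eq_zero_iff' A).2 hA]

theorem changeLevel_injective (hR : R ≠ 0) (hFR : F ∣ R) :
    Function.Injective (changeLevel hFR) := by
  intro ψ₁ ψ₂ h
  ext A
  by_cases hA : IsCoprime A F
  · obtain ⟨A', hA', hsub⟩ := exists_isCoprime_dvd_sub hR hA
    rw [← ψ₁.periodic' A' A hsub, ← ψ₂.periodic' A' A hsub, ← changeLevel_apply hFR ψ₁ hA', h,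
      changeLevel_apply hFR ψ₂ hA']
  · rw [(ψ₁.eq_zero_iff' A).2 hA, (ψ₂.eq_zero_iff' A).2 hA]

/-- The polynomials `F` such that `χ` is constant on the residue classes modulo `F`, among
polynomials coprime to `R`. Allowing `F` not to divide `R` makes them an ideal. -/
def conductorIdeal (χ : FFChar Fq R) (hR : R ≠ 0) : Ideal (Polynomial Fq) where
  carrier := {F | ∀ A B, IsCoprime A R → IsCoprime B R → F ∣ A - B → χ.toFun A = χ.toFun B}
  zero_mem' A B _ _ hAB := by rw [sub_eq_zero.1 (zero_dvd_iff.1 hAB)]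
  smul_mem' c F hF A B hA hB hAB := hF A B hA hB ((dvd_mul_left F c).trans hAB)
  add_mem' {F G} hF hG A B hA hB := by
    rintro ⟨c, hc⟩
    -- `B + F * c` is `B` modulo `F` and `A` modulo `G`; a multiple of `F * G` makes it a unit.
    have hprime (p : Polynomial Fq) (hp : Prime p) (hpC : p ∣ B + F * c) (hpFG : p ∣ F * G) :
        ¬ p ∣ R := by
      intro hpR
      rcases hp.dvd_or_dvd hpFG with hpF | hpG
      · have hpB : p ∣ B := (dvd_add_left (hpF.mul_right c)).1 hpC
        exact hp.not_isUnit (hB.isUnit_of_dvd' hpB hpR)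
      · have hpA : p ∣ A := by
          rw [show A = B + F * c + G * c by linear_combination hc]
          exact dvd_add hpC (hpG.mul_right c)
        exact hp.not_isUnit (hA.isUnit_of_dvd' hpA hpR)
    obtain ⟨t, hC⟩ := exists_isCoprime_add_mul hR hprime
    calc χ.toFun A = χ.toFun (B + F * c + F * G * t) :=
          hG _ _ hA hC ⟨c - F * t, by linear_combination hc⟩
      _ = χ.toFun B := hF _ _ hC hB ⟨c + G * t, by ring⟩

theorem mem_conductorIdeal {χ : FFChar Fq R} {hR : R ≠ 0} :
    F ∈ χ.conductorIdeal hR ↔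
      ∀ A B, IsCoprime A R → IsCoprime B R → F ∣ A - B → χ.toFun A = χ.toFun B :=
  Iff.rfl

theorem mem_range_changeLevel_iff (hR : R ≠ 0) (hFR : F ∣ R) {χ : FFChar Fq R} :
    χ ∈ Set.range (changeLevel hFR) ↔ F ∈ χ.conductorIdeal hR := by
  rw [mem_conductorIdeal]
  constructor
  · rintro ⟨ψ, rfl⟩ A B hA hB hAB
    rw [changeLevel_apply hFR ψ hA, changeLevel_apply hFR ψ hB, ψ.periodic' A B hAB]
  · intro hχ
    let π : (AdjoinRoot R)ˣ →* (AdjoinRoot F)ˣ := Units.map (AdjoinRoot.algHomOfDvd Fq R F hFR)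
    have hπ : Function.Surjective π := units_map_algHomOfDvd_surjective hR hFR
    let χu : (AdjoinRoot R)ˣ →* ℂˣ := (mulCharEquiv R χ).toUnitHom
    have hker : π.ker ≤ χu.ker := by
      intro u hu
      obtain ⟨A, hA⟩ := AdjoinRoot.mk_surjective (u : AdjoinRoot R)
      have hA1 : AdjoinRoot.mk F A = AdjoinRoot.mk F 1 := by
        rw [← algHomOfDvd_mk hFR, hA, map_one]
        exact congrArg Units.val hu
      refine Units.ext ?_
      rw [MulChar.coe_toUnitHom, ← hA, mulCharEquiv_mk, Units.val_one, ← χ.map_one]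
      exact hχ A 1 (isUnit_adjoinRoot_mk_iff.1 (hA ▸ u.isUnit)) isCoprime_one_left
        (AdjoinRoot.mk_eq_mk.1 hA1)
    let ψu : (AdjoinRoot F)ˣ →* ℂˣ := π.liftOfSurjective hπ ⟨χu, hker⟩
    refine ⟨(mulCharEquiv F).symm (MulChar.ofUnitHom ψu), (changeLevel_eq_iff hFR).2 ?_⟩
    intro A hA
    let u : (AdjoinRoot R)ˣ := (isUnit_adjoinRoot_mk_iff.2 hA).unit
    have hψu : ψu (π u) = χu u :=
      π.liftOfRightInverse_comp_apply _ (Function.rightInverse_surjInv hπ) ⟨χu, hker⟩ u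
    calc χ.toFun A = χu u := by
          rw [MulChar.coe_toUnitHom, IsUnit.unit_spec, mulCharEquiv_mk]
      _ = MulChar.ofUnitHom ψu (π u) := by rw [MulChar.ofUnitHom_coe, hψu]
      _ = MulChar.ofUnitHom ψu (AdjoinRoot.mk F A) := congrArg _ (algHomOfDvd_mk hFR A)

/-- The conductor of `χ`, normalized to be monic. -/
noncomputable def conductor (χ : FFChar Fq R) (hR : R ≠ 0) : Polynomial Fq :=
  normalize (Submodule.IsPrincipal.generator (χ.conductorIdeal hR))

theorem conductor_dvd_iff_mem_conductorIdeal {χ : FFChar Fq R} {hR : R ≠ 0} :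
    χ.conductor hR ∣ F ↔ F ∈ χ.conductorIdeal hR := by
  rw [conductor, normalize_dvd_iff, ← Submodule.IsPrincipal.mem_iff_generator_dvd]

theorem conductor_dvd (χ : FFChar Fq R) (hR : R ≠ 0) : χ.conductor hR ∣ R :=
  conductor_dvd_iff_mem_conductorIdeal.2 fun A B _ _ hAB => χ.periodic' A B hAB

theorem conductor_monic (χ : FFChar Fq R) (hR : R ≠ 0) : (χ.conductor hR).Monic :=
  monic_normalize fun h0 => ne_zero_of_dvd_ne_zero hR (χ.conductor_dvd hR) <| by
    rw [conductor, h0, normalize_zero]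

theorem conductor_dvd_iff_mem_range_changeLevel {χ : FFChar Fq R} {hR : R ≠ 0} (hFR : F ∣ R) :
    χ.conductor hR ∣ F ↔ χ ∈ Set.range (changeLevel hFR) := by
  rw [conductor_dvd_iff_mem_conductorIdeal, mem_range_changeLevel_iff]

theorem isInducedBy_iff_conductor_dvd (χ : FFChar Fq R) (hR : R ≠ 0) :
    χ.IsInducedBy F ↔ F.Monic ∧ F ∣ R ∧ χ.conductor hR ∣ F := by
  refine and_congr_right fun _ => and_congr_right fun hFR => ?_
  simp only [conductor_dvd_iff_mem_range_changeLevel hFR, Set.mem_range, changeLevel_eq_iff]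

theorem isPrimitive_iff_natDegree_le (χ : FFChar Fq R) (hR : R ≠ 0) :
    χ.IsPrimitive ↔ R.natDegree ≤ (χ.conductor hR).natDegree := by
  constructor
  · intro h
    exact h _ ((χ.isInducedBy_iff_conductor_dvd hR).2
      ⟨χ.conductor_monic hR, χ.conductor_dvd hR, dvd_rfl⟩)
  · intro h S hS
    obtain ⟨hmonic, -, hdvd⟩ := (χ.isInducedBy_iff_conductor_dvd hR).1 hS
    exact h.trans (natDegree_le_of_dvd hdvd hmonic.ne_zero)

theorem conductor_mul_div (χ : FFChar Fq R) (hR : R ≠ 0) :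
    χ.conductor hR * (R / χ.conductor hR) = R :=
  EuclideanDomain.mul_div_cancel' (χ.conductor_monic hR).ne_zero (χ.conductor_dvd hR)

theorem div_conductor_ne_zero (χ : FFChar Fq R) (hR : R ≠ 0) : R / χ.conductor hR ≠ 0 :=
  right_ne_zero_of_mul ((χ.conductor_mul_div hR).trans_ne hR)

theorem isPrimitive_iff_isUnit_div_conductor (χ : FFChar Fq R) (hR : R ≠ 0) :
    χ.IsPrimitive ↔ IsUnit (R / χ.conductor hR) := by
  have hdiv := χ.div_conductor_ne_zero hR
  have hunit : IsUnit (R / χ.conductor hR) ↔ (R / χ.conductor hR).natDegree = 0 :=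
    isUnit_iff_degree_eq_zero.trans (degree_eq_iff_natDegree_eq hdiv)
  have hdeg := natDegree_mul (χ.conductor_monic hR).ne_zero hdiv
  rw [χ.conductor_mul_div hR] at hdeg
  rw [χ.isPrimitive_iff_natDegree_le hR, hunit]
  omega

theorem sum_ffMu_of_conductor_dvd_div (χ : FFChar Fq R) (hR : R ≠ 0) :
    ∑ E ∈ monicDivisors R with χ.conductor hR ∣ R / E, ffMu E
      = if χ.IsPrimitive then 1 else 0 := by
  have hdiv := χ.div_conductor_ne_zero hR
  have hfilter : {E ∈ monicDivisors R | χ.conductor hR ∣ R / E}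
      = monicDivisors (R / χ.conductor hR) := by
    ext E
    rw [Finset.mem_filter, mem_monicDivisors hR, mem_monicDivisors hdiv, and_assoc,
      dvd_div_iff_mul_dvd (χ.conductor_monic hR).ne_zero (χ.conductor_dvd hR), mul_comm]
    refine and_congr_right fun hE => ⟨?_, fun h => ?_⟩
    · rintro ⟨hER, hdvd⟩
      exact (dvd_div_iff_mul_dvd hE.ne_zero hER).1 hdvd
    · have hER : E ∣ R := (dvd_mul_right E _).trans h
      exact ⟨hER, (dvd_div_iff_mul_dvd hE.ne_zero hER).2 h⟩
  rw [hfilter, sum_ffMu_monicDivisors hdiv]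
  simp only [χ.isPrimitive_iff_isUnit_div_conductor hR]

theorem sum_isPrimitive_eq_sum_monicDivisors {K : Type*} [Ring K] (hR : R ≠ 0)
    [Fintype (FFChar Fq R)] (f : FFChar Fq R → K) :
    ∑ χ : FFChar Fq R with χ.IsPrimitive, f χ
      = ∑ E ∈ monicDivisors R, (ffMu E : K) * ∑ χ with χ.conductor hR ∣ R / E, f χ := by
  calc ∑ χ : FFChar Fq R with χ.IsPrimitive, f χ
      = ∑ χ : FFChar Fq R, ((if χ.IsPrimitive then 1 else 0 : ℤ) : K) * f χ := by
        simp only [Finset.sum_filter, Int.cast_ite, Int.cast_one, Int.cast_zero, ite_mul, one_mul,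
          zero_mul]
    _ = ∑ χ : FFChar Fq R, ∑ E ∈ monicDivisors R,
          if χ.conductor hR ∣ R / E then (ffMu E : K) * f χ else 0 := by
        simp only [← sum_ffMu_of_conductor_dvd_div _ hR, Int.cast_sum, Finset.sum_mul,
          Finset.sum_filter, Int.cast_ite, Int.cast_zero, ite_mul, zero_mul]
    _ = ∑ E ∈ monicDivisors R, (ffMu E : K) * ∑ χ with χ.conductor hR ∣ R / E, f χ := by
        rw [Finset.sum_comm]
        simp only [Finset.mul_sum, Finset.sum_filter, mul_ite, mul_zero]

theorem sum_mul_conj_of_conductor_dvd [Finite Fq] (hR : R ≠ 0) (hFR : F ∣ R)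
    [Fintype (FFChar Fq R)] {A B : Polynomial Fq} (hA : IsCoprime A R) (hB : IsCoprime B R) :
    ∑ χ : FFChar Fq R with χ.conductor hR ∣ F, χ.toFun A * (starRingEnd ℂ) (χ.toFun B)
      = if F ∣ A - B then (ffPhi F : ℂ) else 0 := by
  have hF : F ≠ 0 := ne_zero_of_dvd_ne_zero hR hFR
  have := FFChar.finite hF
  have : Fintype (FFChar Fq F) := Fintype.ofFinite _
  have himage : ({χ | χ.conductor hR ∣ F} : Finset (FFChar Fq R))
      = Finset.univ.image (changeLevel hFR) := by
    ext χ
    simp only [Finset.mem_filter_univ, conductor_dvd_iff_mem_range_changeLevel hFR, Set.mem_range,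
      Finset.mem_image, Finset.mem_univ, true_and]
  rw [himage, Finset.sum_image (changeLevel_injective hR hFR).injOn,
    ← sum_mul_conj hF A (hB.of_isCoprime_of_dvd_right hFR)]
  simp only [changeLevel_apply hFR _ hA, changeLevel_apply hFR _ hB]

theorem mul_conj_eq_zero (χ : FFChar Fq R) {A B : Polynomial Fq} (hAB : ¬ IsCoprime (A * B) R) :
    χ.toFun A * (starRingEnd ℂ) (χ.toFun B) = 0 := by
  have h0 := (χ.eq_zero_iff' (A * B)).2 hAB
  rw [χ.map_mul', mul_eq_zero] at h0
  rwa [mul_eq_zero, map_eq_zero]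

end FFChar

theorem sum_primitive_chars_mul_conj_general {Fq : Type*} [Field Fq] [Finite Fq]
    (R : Polynomial Fq) (hR : R ≠ 0) (A B : Polynomial Fq) :
    ∑ᶠ (χ : FFChar Fq R) (_ : χ.IsPrimitive), χ.toFun A * (starRingEnd ℂ) (χ.toFun B)
      = if IsCoprime (A * B) R then
          ∑ᶠ (E : Polynomial Fq) (_ : E.Monic ∧ E ∣ R ∧ (R / E) ∣ (A - B)),
            (ffMu E : ℂ) * (ffPhi (R / E) : ℂ)
        else 0 := by
  split_ifs with hAB
  · have := FFChar.finite hR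
    have : Fintype (FFChar Fq R) := Fintype.ofFinite _
    have hA : IsCoprime A R := hAB.of_mul_left_left
    have hB : IsCoprime B R := hAB.of_mul_left_right
    have hprimitive (χ : FFChar Fq R) : χ.IsPrimitive ↔ χ ∈ Finset.univ.filter FFChar.IsPrimitive :=
      (Finset.mem_filter_univ χ).symm
    have hdivisors (E : Polynomial Fq) : E.Monic ∧ E ∣ R ∧ R / E ∣ A - B
        ↔ E ∈ (monicDivisors R).filter (R / · ∣ A - B) := by
      rw [Finset.mem_filter, mem_monicDivisors hR, and_assoc]
    rw [finsum_cond_eq_sum_of_cond_iff _ fun {χ} _ => hprimitive χ,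
      FFChar.sum_isPrimitive_eq_sum_monicDivisors hR,
      finsum_cond_eq_sum_of_cond_iff _ fun {E} _ => hdivisors E,
      Finset.sum_filter]
    refine Finset.sum_congr rfl fun E hE => ?_
    have hdvd : R / E ∣ R := EuclideanDomain.div_dvd_of_dvd ((mem_monicDivisors hR).1 hE).2
    rw [FFChar.sum_mul_conj_of_conductor_dvd hR hdvd hA hB, mul_ite, mul_zero]
  · simp only [FFChar.mul_conj_eq_zero _ hAB, finsum_zero]

/-- `∑*_{χ mod R} χ(A)·conj χ(B) = ∑_{EF=R, F ∣ A-B} μ(E)φ(F)` when `(AB,R)=1`, else `0`. -/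
theorem sum_primitive_chars_mul_conj {Fq : Type*} [Field Fq] [Fintype Fq]
    (R : Polynomial Fq) (hR : R.Monic) (A B : Polynomial Fq) :
    ∑ᶠ (χ : FFChar Fq R) (_ : χ.IsPrimitive), χ.toFun A * (starRingEnd ℂ) (χ.toFun B)
      = if IsCoprime (A * B) R then
          ∑ᶠ (E : Polynomial Fq) (_ : E.Monic ∧ E ∣ R ∧ (R / E) ∣ (A - B)),
            (ffMu E : ℂ) * (ffPhi (R / E) : ℂ)
        else 0 :=
  sum_primitive_chars_mul_conj_general R hR.ne_zero A B
end

section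
/- For all positive integers x and any q ≥ 2, ∑_{N monic in F_q[T], deg N ≤ x} 2^{ω(N)}/|N| = ((q-1)/(2q))·x² + ((3q+1)/(2q))·x + 1. -/
open Polynomial UniqueFactorizationMonoid
open scoped Classical

/-- `ω(N)`: the number of distinct monic prime divisors of `N` in `F_q[T]`. -/
noncomputable def ffOmega {Fq : Type*} [Field Fq] (N : Polynomial Fq) : ℕ :=
  (normalizedFactors N).toFinset.card

/-!
`2 ^ ω(N)` counts the ordered pairs `(a, b)` of coprime monic polynomials with `a * b = N`, since
each prime divisor of `N` goes wholly to `a` or wholly to `b`. Hence the sum over `deg N = n` is the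
number `C(n)` of coprime monic pairs of total degree `n`. All monic pairs of total degree `n` number
`(n + 1) q ^ n`, and splitting off their monic gcd, of degree `k`, gives
`(n + 1) q ^ n = ∑ k, q ^ k C(n - 2 k)`. Comparing this for `n + 2` and `n` determines `C`.
-/

section CoprimeFactorizations

variable {M : Type*} [CommMonoidWithZero M] [UniqueFactorizationMonoid M]

theorem isRelPrime_of_disjoint_normalizedFactors [NormalizationMonoid M] {a b : M} (ha : a ≠ 0)
    (hb : b ≠ 0) (h : Disjoint (normalizedFactors a) (normalizedFactors b)) : IsRelPrime a b := by
  rw [isRelPrime_iff_no_prime_factors ha]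
  intro p hpa hpb hp
  have mem {c : M} (hc : c ≠ 0) (hpc : p ∣ c) : normalize p ∈ normalizedFactors c :=
    (mem_normalizedFactors_iff' hc).2
      ⟨((associated_normalize p).irreducible_iff).1 hp.irreducible, normalize_idem p,
        normalize_dvd_iff.2 hpc⟩
  exact Multiset.disjoint_left.1 h (mem ha hpa) (mem hb hpb)

theorem normalizedFactors_prod_of_le [NormalizationMonoid M] {s : Multiset M} {N : M}
    (hs : s ≤ normalizedFactors N) : normalizedFactors s.prod = s := by
  have mem_factors {p : M} (hp : p ∈ s) : p ∈ normalizedFactors N := Multiset.mem_of_le hs hp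
  rw [normalizedFactors_prod_eq s fun p hp ↦ irreducible_of_normalized_factor p (mem_factors hp)]
  exact (Multiset.map_congr rfl fun p hp ↦ normalize_normalized_factor p (mem_factors hp)).trans
    (Multiset.map_id s)

theorem filter_mem_primeFactors_normalizedFactors_mul [NormalizationMonoid M] {a b : M}
    (ha : a ≠ 0) (hb : b ≠ 0) (h : IsRelPrime a b) :
    (normalizedFactors (a * b)).filter (· ∈ primeFactors a) = normalizedFactors a := by
  have hdisj := disjoint_normalizedFactors h
  simp only [normalizedFactors_mul ha hb, Multiset.filter_add, mem_primeFactors]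
  rw [Multiset.filter_eq_self.2 fun _ hp ↦ hp,
    Multiset.filter_eq_nil.2 fun _ hpb hpa ↦ Multiset.disjoint_left.1 hdisj hpa hpb, add_zero]

/-- The ordered factorizations `N = a * b` into relatively prime factors, each taken up to units by
requiring it to be normalized. -/
def coprimeFactorizations [NormalizationMonoid M] (N : M) : Set (M × M) :=
  {p | normalize p.1 = p.1 ∧ normalize p.2 = p.2 ∧ IsRelPrime p.1 p.2 ∧ p.1 * p.2 = N}

variable [StrongNormalizationMonoid M] {N : M}

theorem injOn_primeFactors_fst_coprimeFactorizations (hN : N ≠ 0) :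
    Set.InjOn (fun p : M × M ↦ primeFactors p.1) (coprimeFactorizations N) := by
  have fst_eq {p : M × M} (hp : p ∈ coprimeFactorizations N) :
      ((normalizedFactors N).filter (· ∈ primeFactors p.1)).prod = p.1 := by
    obtain ⟨ha, -, hrel, rfl⟩ := hp
    have ha₀ := left_ne_zero_of_mul hN
    rw [filter_mem_primeFactors_normalizedFactors_mul ha₀ (right_ne_zero_of_mul hN) hrel,
      prod_normalizedFactors_eq ha₀, ha]
  intro p hp r hr (hpr : primeFactors p.1 = primeFactors r.1)
  have hfst : p.1 = r.1 := by rw [← fst_eq hp, ← fst_eq hr, hpr]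
  have hmul : p.1 * p.2 = p.1 * r.2 := by rw [hp.2.2.2, hfst, hr.2.2.2]
  have hp₀ : p.1 ≠ 0 := left_ne_zero_of_mul (hp.2.2.2.trans_ne hN)
  exact Prod.ext hfst (mul_left_cancel₀ hp₀ hmul)

theorem exists_mem_coprimeFactorizations_primeFactors_fst_eq (hN : N ≠ 0) (hnorm : normalize N = N)
    {S : Finset M} (hS : S ⊆ primeFactors N) :
    ∃ p ∈ coprimeFactorizations N, primeFactors p.1 = S := by
  set s := (normalizedFactors N).filter (· ∈ S)
  set t := (normalizedFactors N).filter (· ∉ S)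
  have hs : normalizedFactors s.prod = s := normalizedFactors_prod_of_le (Multiset.filter_le _ _)
  have ht : normalizedFactors t.prod = t := normalizedFactors_prod_of_le (Multiset.filter_le _ _)
  have hst : s.prod * t.prod = N := by
    rw [← Multiset.prod_add, Multiset.filter_add_not, prod_normalizedFactors_eq hN, hnorm]
  have hs₀ : s.prod ≠ 0 := left_ne_zero_of_mul (hst.trans_ne hN)
  have ht₀ : t.prod ≠ 0 := right_ne_zero_of_mul (hst.trans_ne hN)
  have hdisj : Disjoint s t := Multiset.disjoint_left.2 fun hps hpt ↦
    Multiset.of_mem_filter hpt (Multiset.of_mem_filter hps)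
  refine ⟨(s.prod, t.prod), ⟨?_, ?_, ?_, hst⟩, ?_⟩
  · rw [← prod_normalizedFactors_eq hs₀, hs]
  · rw [← prod_normalizedFactors_eq ht₀, ht]
  · exact isRelPrime_of_disjoint_normalizedFactors hs₀ ht₀ (by rwa [hs, ht])
  · ext p
    rw [mem_primeFactors, hs, Multiset.mem_filter, and_iff_right_iff_imp]
    exact fun hp ↦ mem_primeFactors.1 (hS hp)

theorem ncard_coprimeFactorizations (hN : N ≠ 0) (hnorm : normalize N = N) :
    (coprimeFactorizations N).ncard = 2 ^ (primeFactors N).card := by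
  have himage : (fun p : M × M ↦ primeFactors p.1) '' coprimeFactorizations N =
      (primeFactors N).powerset := by
    ext S
    rw [Finset.mem_coe, Finset.mem_powerset]
    refine ⟨?_, exists_mem_coprimeFactorizations_primeFactors_fst_eq hN hnorm⟩
    rintro ⟨p, ⟨-, -, -, rfl⟩, rfl⟩
    rw [primeFactors_mul_eq_union (left_ne_zero_of_mul hN) (right_ne_zero_of_mul hN)]
    exact Finset.subset_union_left
  rw [← (injOn_primeFactors_fst_coprimeFactorizations hN).ncard_image, himage,
    Set.ncard_coe_finset, Finset.card_powerset]

end CoprimeFactorizations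

theorem associated_of_mul_eq_mul_of_isRelPrime {M : Type*} [CommMonoidWithZero M]
    [IsCancelMulZero M] [DecompositionMonoid M] {d a b d' a' b' : M} (hd : d ≠ 0) (hd' : d' ≠ 0)
    (hab : IsRelPrime a b) (hab' : IsRelPrime a' b') (ha : d * a = d' * a')
    (hb : d * b = d' * b') : Associated a a' := by
  have hcross : a * b' = a' * b := by
    refine mul_left_cancel₀ (mul_ne_zero hd hd') ?_
    calc d * d' * (a * b') = d * a * (d' * b') := by ac_rfl
      _ = d' * a' * (d * b) := by rw [ha, hb]
      _ = d * d' * (a' * b) := by ac_rfl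
  exact associated_of_dvd_dvd (hab.dvd_of_dvd_mul_right ⟨b', hcross.symm⟩)
    (hab'.dvd_of_dvd_mul_right ⟨b, hcross⟩)

theorem exists_monic_isCoprime_mul_eq {F : Type*} [Field F] {A B : F[X]} (hA : A.Monic)
    (hB : B.Monic) : ∃ D a b : F[X],
      D.Monic ∧ a.Monic ∧ b.Monic ∧ IsCoprime a b ∧ D * a = A ∧ D * b = B := by
  obtain ⟨a, b, D, hab, rfl, rfl⟩ := exists_reduced_factors A hA.ne_zero B
  have hD : D ≠ 0 := left_ne_zero_of_mul hA.ne_zero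
  have ha : a ≠ 0 := right_ne_zero_of_mul hA.ne_zero
  have hb : b ≠ 0 := right_ne_zero_of_mul hB.ne_zero
  refine ⟨normalize D, normalize a, normalize b, monic_normalize hD, monic_normalize ha,
    monic_normalize hb, ?_, ?_, ?_⟩
  · rw [← isRelPrime_iff_isCoprime]
    exact fun p hpa hpb ↦ hab (dvd_normalize_iff.1 hpa) (dvd_normalize_iff.1 hpb)
  · rw [← normalize_mul, hA.normalize_eq_self]
  · rw [← normalize_mul, hB.normalize_eq_self]

section MonicPolynomials

variable (R : Type*) [Ring R] [Nontrivial R]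

theorem finite_monic_natDegree_eq [Finite R] (n : ℕ) :
    {N : R[X] | N.Monic ∧ N.natDegree = n}.Finite :=
  Set.finite_coe_iff.1 <|
    Finite.of_equiv _ ((monicEquivDegreeLT n).trans (degreeLTEquiv R n).toEquiv).symm

variable [Fintype R]

theorem card_monic_natDegree_eq (n : ℕ) :
    Nat.card {N : R[X] // N.Monic ∧ N.natDegree = n} = Fintype.card R ^ n := by
  rw [Nat.card_congr ((monicEquivDegreeLT n).trans (degreeLTEquiv R n).toEquiv)]
  simp

/-- The monic polynomials of degree exactly `n` over a finite ring. -/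
noncomputable def monicOfDegree (n : ℕ) : Finset R[X] :=
  (finite_monic_natDegree_eq R n).toFinset

/-- The ordered pairs of monic polynomials whose degrees add up to `n`. -/
noncomputable def monicPairs (n : ℕ) : Finset (R[X] × R[X]) :=
  (Finset.HasAntidiagonal.antidiagonal n).biUnion fun d ↦ monicOfDegree R d.1 ×ˢ monicOfDegree R d.2

variable {R}

theorem mem_monicOfDegree {n : ℕ} {N : R[X]} :
    N ∈ monicOfDegree R n ↔ N.Monic ∧ N.natDegree = n :=
  (finite_monic_natDegree_eq R n).mem_toFinset

theorem mem_monicPairs {n : ℕ} {p : R[X] × R[X]} :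
    p ∈ monicPairs R n ↔ p.1.Monic ∧ p.2.Monic ∧ p.1.natDegree + p.2.natDegree = n := by
  simp only [monicPairs, Finset.mem_biUnion, Finset.HasAntidiagonal.mem_antidiagonal,
    Finset.mem_product, mem_monicOfDegree, Prod.exists]
  constructor
  · rintro ⟨i, j, hn, ⟨ha, rfl⟩, hb, rfl⟩
    exact ⟨ha, hb, hn⟩
  · rintro ⟨ha, hb, hn⟩
    exact ⟨_, _, hn, ⟨ha, rfl⟩, hb, rfl⟩

theorem disjoint_monicOfDegree {m n : ℕ} (h : m ≠ n) :
    Disjoint (monicOfDegree R m) (monicOfDegree R n) :=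
  Finset.disjoint_left.2 fun _ hm hn ↦
    h ((mem_monicOfDegree.1 hm).2.symm.trans (mem_monicOfDegree.1 hn).2)

theorem card_monicOfDegree (n : ℕ) : (monicOfDegree R n).card = Fintype.card R ^ n := by
  rw [monicOfDegree, ← Set.ncard_eq_toFinset_card _ (finite_monic_natDegree_eq R n),
    ← card_monic_natDegree_eq]
  rfl

theorem card_monicPairs (n : ℕ) : (monicPairs R n).card = (n + 1) * Fintype.card R ^ n := by
  have hcard : ∀ d ∈ Finset.HasAntidiagonal.antidiagonal n,
      (monicOfDegree R d.1 ×ˢ monicOfDegree R d.2).card = Fintype.card R ^ n := by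
    intro d hd
    rw [Finset.card_product, card_monicOfDegree, card_monicOfDegree, ← pow_add,
      Finset.HasAntidiagonal.mem_antidiagonal.1 hd]
  rw [monicPairs, Finset.card_biUnion, Finset.sum_congr rfl hcard]
  · simp
  · intro d _ e _ hde
    refine Finset.disjoint_product.2 ?_
    by_contra! h
    exact hde (Prod.ext (not_imp_comm.1 disjoint_monicOfDegree h.1)
      (not_imp_comm.1 disjoint_monicOfDegree h.2))

theorem finsum_monic_natDegree_le {A : Type*} [AddCommMonoid A] (f : R[X] → A) (x : ℕ) :
    ∑ᶠ (N : R[X]) (_ : N.Monic ∧ N.natDegree ≤ x), f N =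
      ∑ n ∈ Finset.range (x + 1), ∑ N ∈ monicOfDegree R n, f N := by
  have mem_iff (N : R[X]) : N.Monic ∧ N.natDegree ≤ x ↔
      N ∈ (Finset.range (x + 1)).biUnion (monicOfDegree R) := by
    simp [mem_monicOfDegree, and_comm]
  simp only [mem_iff]
  rw [finsum_mem_finset_eq_sum, Finset.sum_biUnion fun _ _ _ _ ↦ disjoint_monicOfDegree]

end MonicPolynomials

section CoprimeMonicPairs

variable (R : Type*) [CommRing R] [Nontrivial R] [Fintype R]

/-- The ordered pairs of coprime monic polynomials whose degrees add up to `n`. -/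
noncomputable def coprimeMonicPairs (n : ℕ) : Finset (R[X] × R[X]) :=
  (monicPairs R n).filter fun p ↦ IsCoprime p.1 p.2

variable {R}

theorem mem_coprimeMonicPairs {n : ℕ} {p : R[X] × R[X]} :
    p ∈ coprimeMonicPairs R n ↔
      (p.1.Monic ∧ p.2.Monic ∧ p.1.natDegree + p.2.natDegree = n) ∧ IsCoprime p.1 p.2 := by
  rw [coprimeMonicPairs, Finset.mem_filter, mem_monicPairs]

end CoprimeMonicPairs

section FiniteField

variable {F : Type*} [Field F] [Fintype F]

/-- The triples `(D, a, b)`, tagged by `k = deg D`, of monic polynomials with `a` and `b` coprime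
such that `D * a` and `D * b` have total degree `n`. -/
noncomputable def gcdReducedMonicPairs (F : Type*) [Field F] [Fintype F] (n : ℕ) :
    Finset ((_ : ℕ) × F[X] × F[X] × F[X]) :=
  (Finset.range (n / 2 + 1)).sigma fun k ↦ monicOfDegree F k ×ˢ coprimeMonicPairs F (n - 2 * k)

theorem mem_gcdReducedMonicPairs {n k : ℕ} {D a b : F[X]} :
    ⟨k, D, a, b⟩ ∈ gcdReducedMonicPairs F n ↔ D.natDegree = k ∧ D.Monic ∧ a.Monic ∧ b.Monic ∧
      IsCoprime a b ∧ 2 * D.natDegree + a.natDegree + b.natDegree = n := by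
  simp only [gcdReducedMonicPairs, Finset.mem_sigma, Finset.mem_range, Finset.mem_product,
    mem_monicOfDegree, mem_coprimeMonicPairs]
  constructor
  · rintro ⟨hk, ⟨hD, hDk⟩, ⟨ha, hb, hdeg⟩, hab⟩
    exact ⟨hDk, hD, ha, hb, hab, by omega⟩
  · rintro ⟨hDk, hD, ha, hb, hab, hdeg⟩
    exact ⟨by omega, ⟨hD, hDk⟩, ⟨ha, hb, by omega⟩, hab⟩

theorem bijOn_gcdReducedMonicPairs (n : ℕ) :
    Set.BijOn (fun t ↦ (t.2.1 * t.2.2.1, t.2.1 * t.2.2.2))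
      (gcdReducedMonicPairs F n : Set ((_ : ℕ) × F[X] × F[X] × F[X])) (monicPairs F n) := by
  refine ⟨?_, ?_, ?_⟩
  · rintro ⟨k, D, a, b⟩ ht
    obtain ⟨-, hD, ha, hb, -, hdeg⟩ := mem_gcdReducedMonicPairs.1 ht
    refine mem_monicPairs.2 ⟨hD.mul ha, hD.mul hb, ?_⟩
    rw [hD.natDegree_mul ha, hD.natDegree_mul hb]
    omega
  · rintro ⟨k, D, a, b⟩ ht ⟨k', D', a', b'⟩ ht' heq
    obtain ⟨rfl, hD, ha, -, hab, -⟩ := mem_gcdReducedMonicPairs.1 ht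
    obtain ⟨rfl, hD', ha', -, hab', -⟩ := mem_gcdReducedMonicPairs.1 ht'
    obtain ⟨hA, hB⟩ : D * a = D' * a' ∧ D * b = D' * b' := Prod.mk.inj heq
    obtain rfl : a = a' := eq_of_monic_of_associated ha ha' <|
      associated_of_mul_eq_mul_of_isRelPrime hD.ne_zero hD'.ne_zero hab.isRelPrime hab'.isRelPrime
        hA hB
    obtain rfl : D = D' := mul_right_cancel₀ ha.ne_zero hA
    obtain rfl : b = b' := mul_left_cancel₀ hD.ne_zero hB
    rfl
  · rintro ⟨A, B⟩ hAB
    obtain ⟨hA, hB, hdeg⟩ := mem_monicPairs.1 hAB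
    obtain ⟨D, a, b, hD, ha, hb, hab, rfl, rfl⟩ := exists_monic_isCoprime_mul_eq hA hB
    rw [hD.natDegree_mul ha, hD.natDegree_mul hb] at hdeg
    exact ⟨⟨_, D, a, b⟩, mem_gcdReducedMonicPairs.2 ⟨rfl, hD, ha, hb, hab, by omega⟩, rfl⟩

theorem card_monicPairs_eq_sum_card_coprimeMonicPairs (n : ℕ) :
    (monicPairs F n).card = ∑ k ∈ Finset.range (n / 2 + 1),
      Fintype.card F ^ k * (coprimeMonicPairs F (n - 2 * k)).card := by
  rw [← (bijOn_gcdReducedMonicPairs n).finsetCard_eq, gcdReducedMonicPairs, Finset.card_sigma]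
  simp only [Finset.card_product, card_monicOfDegree]

theorem card_monicPairs_add_two (n : ℕ) :
    (monicPairs F (n + 2)).card =
      (coprimeMonicPairs F (n + 2)).card + Fintype.card F * (monicPairs F n).card := by
  rw [card_monicPairs_eq_sum_card_coprimeMonicPairs (n + 2),
    card_monicPairs_eq_sum_card_coprimeMonicPairs n, show (n + 2) / 2 + 1 = n / 2 + 1 + 1 by omega,
    Finset.sum_range_succ', Finset.mul_sum, add_comm]
  congr 1
  · simp
  · refine Finset.sum_congr rfl fun k _ ↦ ?_
    rw [show n + 2 - 2 * (k + 1) = n - 2 * k by omega, pow_succ', mul_assoc]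

theorem card_coprimeMonicPairs_zero : (coprimeMonicPairs F 0).card = 1 := by
  simpa [card_monicPairs] using (card_monicPairs_eq_sum_card_coprimeMonicPairs (F := F) 0).symm

-- The recursion gives `C(n + 1) = (n + 2) q ^ (n + 1) - n q ^ n`; subtraction in `ℕ` would truncate.
theorem card_coprimeMonicPairs_succ_add (n : ℕ) :
    (coprimeMonicPairs F (n + 1)).card + n * Fintype.card F ^ n =
      (n + 2) * Fintype.card F ^ (n + 1) := by
  cases n with
  | zero =>
    simpa [card_monicPairs] using (card_monicPairs_eq_sum_card_coprimeMonicPairs (F := F) 1).symm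
  | succ n =>
    have hrec := card_monicPairs_add_two (F := F) n
    rw [card_monicPairs, card_monicPairs] at hrec
    linear_combination -hrec

theorem card_coprimeMonicPairs_filter_mul_eq {n : ℕ} {N : F[X]} (hN : N ∈ monicOfDegree F n) :
    ((coprimeMonicPairs F n).filter fun p ↦ p.1 * p.2 = N).card = 2 ^ ffOmega N := by
  obtain ⟨hmonic, rfl⟩ := mem_monicOfDegree.1 hN
  have hcoe : ((coprimeMonicPairs F N.natDegree).filter fun p ↦ p.1 * p.2 = N : Set (F[X] × F[X])) =
      coprimeFactorizations N := by
    ext ⟨a, b⟩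
    simp only [Finset.coe_filter, Set.mem_ofPred_eq, mem_coprimeMonicPairs, coprimeFactorizations,
      isRelPrime_iff_isCoprime]
    constructor
    · rintro ⟨⟨⟨ha, hb, -⟩, hab⟩, hmul⟩
      exact ⟨ha.normalize_eq_self, hb.normalize_eq_self, hab, hmul⟩
    · rintro ⟨ha, hb, hab, rfl⟩
      have ha' : a.Monic := (normalize_eq_self_iff_monic (left_ne_zero_of_mul hmonic.ne_zero)).1 ha
      have hb' : b.Monic := (normalize_eq_self_iff_monic (right_ne_zero_of_mul hmonic.ne_zero)).1 hb
      exact ⟨⟨⟨ha', hb', (ha'.natDegree_mul hb').symm⟩, hab⟩, rfl⟩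
  rw [← Set.ncard_coe_finset, hcoe,
    ncard_coprimeFactorizations hmonic.ne_zero hmonic.normalize_eq_self, ffOmega,
    toFinset_normalizedFactors]

theorem sum_two_pow_ffOmega (n : ℕ) :
    ∑ N ∈ monicOfDegree F n, 2 ^ ffOmega N = (coprimeMonicPairs F n).card := by
  have hmaps : ∀ p ∈ coprimeMonicPairs F n, p.1 * p.2 ∈ monicOfDegree F n := by
    intro p hp
    obtain ⟨⟨ha, hb, hn⟩, -⟩ := mem_coprimeMonicPairs.1 hp
    exact mem_monicOfDegree.2 ⟨ha.mul hb, (ha.natDegree_mul hb).trans hn⟩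
  rw [Finset.card_eq_sum_card_fiberwise hmaps]
  exact Finset.sum_congr rfl fun N hN ↦ (card_coprimeMonicPairs_filter_mul_eq hN).symm

theorem sum_two_pow_ffOmega_div_norm (n : ℕ) :
    ∑ N ∈ monicOfDegree F n, (2 : ℝ) ^ ffOmega N / (Fintype.card F : ℝ) ^ N.natDegree =
      (coprimeMonicPairs F n).card / (Fintype.card F : ℝ) ^ n := by
  rw [← sum_two_pow_ffOmega]
  push_cast
  rw [Finset.sum_div]
  exact Finset.sum_congr rfl fun N hN ↦ by rw [(mem_monicOfDegree.1 hN).2]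

theorem card_coprimeMonicPairs_succ_div (n : ℕ) :
    ((coprimeMonicPairs F (n + 1)).card : ℝ) / (Fintype.card F : ℝ) ^ (n + 1) =
      n + 2 - n / (Fintype.card F : ℝ) := by
  have hq : (Fintype.card F : ℝ) ≠ 0 := Nat.cast_ne_zero.2 Fintype.card_ne_zero
  have hcard : ((coprimeMonicPairs F (n + 1)).card : ℝ) + n * (Fintype.card F : ℝ) ^ n =
      (n + 2) * (Fintype.card F : ℝ) ^ (n + 1) := by
    exact_mod_cast card_coprimeMonicPairs_succ_add n
  rw [eq_sub_of_add_eq hcard, pow_succ]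
  field_simp

theorem sum_range_card_coprimeMonicPairs_div (x : ℕ) :
    ∑ n ∈ Finset.range (x + 1), (coprimeMonicPairs F n).card / (Fintype.card F : ℝ) ^ n =
      ((Fintype.card F : ℝ) - 1) / (2 * (Fintype.card F : ℝ)) * x ^ 2
        + (3 * (Fintype.card F : ℝ) + 1) / (2 * (Fintype.card F : ℝ)) * x + 1 := by
  have hq : (Fintype.card F : ℝ) ≠ 0 := Nat.cast_ne_zero.2 Fintype.card_ne_zero
  induction x with
  | zero => simp [card_coprimeMonicPairs_zero]
  | succ n ih =>
    rw [Finset.sum_range_succ, ih, card_coprimeMonicPairs_succ_div]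
    push_cast
    field_simp
    ring

end FiniteField

/-- `∑_{N monic, deg N ≤ x} 2^{ω(N)}/|N| = ((q-1)/(2q))x² + ((3q+1)/(2q))x + 1`. -/
theorem sum_two_pow_omega_div_norm {Fq : Type*} [Field Fq] [Fintype Fq]
    (x : ℕ) (hx : 1 ≤ x) :
    ∑ᶠ (N : Polynomial Fq) (_ : N.Monic ∧ N.natDegree ≤ x),
        (2 : ℝ) ^ ffOmega N / (Fintype.card Fq : ℝ) ^ N.natDegree
      = ((Fintype.card Fq : ℝ) - 1) / (2 * (Fintype.card Fq : ℝ)) * x ^ 2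
        + (3 * (Fintype.card Fq : ℝ) + 1) / (2 * (Fintype.card Fq : ℝ)) * x + 1 := by
  simp only [finsum_monic_natDegree_le, sum_two_pow_ffOmega_div_norm]
  exact sum_range_card_coprimeMonicPairs_div x
end

section
/- For every positive integer x, ∑_{N monic in F_q[T], deg N ≤ x} μ(N)²/φ(N) ≥ x. -/
open Polynomial UniqueFactorizationMonoid
open scoped Classical

/-!
Write `q` for the size of the field, `|M| = q ^ deg M` for the norm of `M`, and group the monic `M`
with `deg M ≤ x` by their radical `N`, which is squarefree. There are `q ^ d` monic polynomials of
degree `d`, so the sum of `1 / |M|` over all `M` is `x + 1`, and it suffices that the `M` with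
radical `N` contribute at most `1 / φ(N)`. Multiply each such `M` by the `φ(N) q ^ (x - deg M)`
polynomials `G` prime to `N` with `deg G < deg N + x - deg M`. The products are distinct, since `M`
is recovered from `M * G` as its part composed of primes dividing `N`, and all of them lie among the
`q ^ x` multiples of `N` of degree `< deg N + x`.
-/

section Radical

variable {R : Type*} [CommSemiring R] [NormalizationMonoid R] [UniqueFactorizationMonoid R]

lemma isCoprime_of_isCoprime_radical {a b : R} (ha : a ≠ 0) (h : IsCoprime (radical a) b) :
    IsCoprime a b := by
  obtain ⟨n, hn⟩ := exists_dvd_radical_self_pow ha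
  exact h.pow_left.of_isCoprime_of_dvd_left hn

lemma associated_of_mul_eq_mul_of_isCoprime_radical {a a' b b' : R} (ha : a ≠ 0) (ha' : a' ≠ 0)
    (hrad : radical a = radical a') (hb : IsCoprime (radical a) b) (hb' : IsCoprime (radical a) b')
    (h : a * b = a' * b') : Associated a a' :=
  associated_of_dvd_dvd
    ((isCoprime_of_isCoprime_radical ha hb').dvd_of_dvd_mul_right (Dvd.intro _ h))
    ((isCoprime_of_isCoprime_radical ha' (hrad ▸ hb)).dvd_of_dvd_mul_right (Dvd.intro _ h.symm))

lemma monic_radical {F : Type*} [Field F] (M : F[X]) : (radical M).Monic := by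
  refine monic_prod_of_monic _ _ fun p hp => ?_
  rcases eq_or_ne M 0 with rfl | hM
  · simp at hp
  · exact ((Polynomial.mem_normalizedFactors_iff hM).mp (mem_primeFactors.mp hp)).2.1

lemma eq_and_eq_of_mul_eq_mul_of_radical_eq {F : Type*} [Field F] {M M' G G' : F[X]}
    (hM : M.Monic) (hM' : M'.Monic) (hrad : radical M = radical M')
    (hG : IsCoprime (radical M) G) (hG' : IsCoprime (radical M) G') (h : M * G = M' * G') :
    M = M' ∧ G = G' := by
  obtain rfl : M = M' := eq_of_monic_of_associated hM hM' <|
    associated_of_mul_eq_mul_of_isCoprime_radical hM.ne_zero hM'.ne_zero hrad hG hG' h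
  exact ⟨rfl, mul_left_cancel₀ hM.ne_zero h⟩

end Radical

section Counting

lemma degree_mul_lt_natDegree_add_iff {R : Type*} [Semiring R] [NoZeroDivisors R] {f : R[X]}
    (hf : f ≠ 0) (g : R[X]) (k : ℕ) :
    (f * g).degree < (f.natDegree + k : ℕ) ↔ g.degree < k := by
  rw [degree_mul, degree_eq_natDegree hf, Nat.cast_add]
  exact WithBot.add_lt_add_iff_left (WithBot.natCast_ne_bot _)

/-- The polynomials of degree `< n` as a finite set; `Polynomial.degreeLT` is the submodule. -/
noncomputable def polysDegreeLT (R : Type*) [Semiring R] [Fintype R] (n : ℕ) : Finset R[X] :=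
  Finset.univ.map
    ((degreeLTEquiv R n).symm.toEquiv.toEmbedding.trans (Function.Embedding.subtype _))

lemma mem_polysDegreeLT {R : Type*} [Semiring R] [Fintype R] {n : ℕ} {f : R[X]} :
    f ∈ polysDegreeLT R n ↔ f.degree < n := by
  rw [← mem_degreeLT, polysDegreeLT, Finset.mem_map]
  constructor
  · rintro ⟨c, -, rfl⟩
    exact ((degreeLTEquiv R n).symm c).2
  · intro hf
    exact ⟨degreeLTEquiv R n ⟨f, hf⟩, Finset.mem_univ _, by simp⟩

lemma card_polysDegreeLT (R : Type*) [Semiring R] [Fintype R] (n : ℕ) :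
    (polysDegreeLT R n).card = Fintype.card R ^ n := by
  simp [polysDegreeLT]

lemma degree_add_mul_lt_natDegree_add_iff {R : Type*} [Ring R] [NoZeroDivisors R] {N A : R[X]}
    (hN : N ≠ 0) (hA : A.degree < N.natDegree) (B : R[X]) (k : ℕ) :
    (A + N * B).degree < (N.natDegree + k : ℕ) ↔ B.degree < k := by
  have hA' : A ∈ degreeLT R (N.natDegree + k) :=
    degreeLT_mono (Nat.le_add_right _ k) (mem_degreeLT.mpr hA)
  rw [← mem_degreeLT, Submodule.add_mem_iff_right _ hA', mem_degreeLT,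
    degree_mul_lt_natDegree_add_iff hN]

/-- The polynomials of degree `< n` prime to `N`; for `n = deg N` these are the reduced residues
modulo `N`. -/
noncomputable def coprimePolysDegreeLT {R : Type*} [CommSemiring R] [Fintype R] (N : R[X])
    (n : ℕ) : Finset R[X] :=
  (polysDegreeLT R n).filter (IsCoprime N)

lemma mem_coprimePolysDegreeLT {R : Type*} [CommSemiring R] [Fintype R] {N G : R[X]} {n : ℕ} :
    G ∈ coprimePolysDegreeLT N n ↔ G.degree < n ∧ IsCoprime N G := by
  rw [coprimePolysDegreeLT, Finset.mem_filter, mem_polysDegreeLT]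

variable {F : Type*} [Field F] [Fintype F]

lemma card_filter_dvd_polysDegreeLT {N : F[X]} (hN : N ≠ 0) (k : ℕ) :
    ((polysDegreeLT F (N.natDegree + k)).filter (N ∣ ·)).card = Fintype.card F ^ k := by
  have himage : (polysDegreeLT F (N.natDegree + k)).filter (N ∣ ·) =
      (polysDegreeLT F k).image (N * ·) := by
    ext f
    simp only [Finset.mem_filter, Finset.mem_image, mem_polysDegreeLT]
    constructor
    · rintro ⟨hf, K, rfl⟩
      exact ⟨K, (degree_mul_lt_natDegree_add_iff hN K k).mp hf, rfl⟩
    · rintro ⟨K, hK, rfl⟩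
      exact ⟨(degree_mul_lt_natDegree_add_iff hN K k).mpr hK, dvd_mul_right N K⟩
  rw [himage, Finset.card_image_of_injective _ (mul_right_injective₀ hN), card_polysDegreeLT]

lemma ffPhi_eq_card {N : F[X]} (hN : N ≠ 0) :
    ffPhi N = (coprimePolysDegreeLT N N.natDegree).card := by
  rw [ffPhi]
  split_ifs with hdeg
  · have hunit : IsUnit N := by
      rw [isUnit_iff_degree_eq_zero, degree_eq_natDegree hN, hdeg, Nat.cast_zero]
    have hzero : coprimePolysDegreeLT N N.natDegree = {0} := by
      ext G
      rw [mem_coprimePolysDegreeLT, hdeg, Nat.cast_zero, Nat.WithBot.lt_zero_iff,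
        degree_eq_bot, Finset.mem_singleton, and_iff_left_iff_imp]
      rintro rfl
      exact isCoprime_zero_right.mpr hunit
    rw [hzero, Finset.card_singleton]
  · rw [← Nat.card_eq_finsetCard]
    exact Nat.card_congr (Equiv.subtypeEquivRight fun A => by
      rw [mem_coprimePolysDegreeLT, degree_eq_natDegree hN, isCoprime_comm])

lemma ffPhi_pos {K : Type*} [Field K] [Finite K] {N : K[X]} (hN : N ≠ 0) : 0 < ffPhi N := by
  have := Fintype.ofFinite K
  by_cases hdeg : N.natDegree = 0
  · simp [ffPhi, hdeg]
  · rw [ffPhi_eq_card hN, Finset.card_pos]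
    refine ⟨1, mem_coprimePolysDegreeLT.mpr ⟨?_, isCoprime_one_right⟩⟩
    rw [degree_one]
    exact_mod_cast Nat.pos_of_ne_zero hdeg

lemma card_coprimePolysDegreeLT_natDegree_add {N : F[X]} (hN : N ≠ 0) (k : ℕ) :
    (coprimePolysDegreeLT N (N.natDegree + k)).card = ffPhi N * Fintype.card F ^ k := by
  have hmod (G : F[X]) : (G % N).degree < N.natDegree :=
    degree_eq_natDegree hN ▸ degree_mod_lt G hN
  have hmod_add (A B : F[X]) (hA : A.degree < N.natDegree) : (A + N * B) % N = A := by
    rw [add_mod, EuclideanDomain.mod_eq_zero.mpr (dvd_mul_right N B), add_zero,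
      mod_eq_self_iff hN, degree_eq_natDegree hN]
    exact hA
  rw [ffPhi_eq_card hN, ← card_polysDegreeLT F k, ← Finset.card_product]
  refine Finset.card_nbij' (fun G => (G % N, G / N)) (fun p => p.1 + N * p.2) ?_ ?_ ?_ ?_
  · intro G hG
    rw [Finset.mem_coe, ← EuclideanDomain.mod_add_div G N, mem_coprimePolysDegreeLT,
      degree_add_mul_lt_natDegree_add_iff hN (hmod G), IsCoprime.add_mul_left_right_iff] at hG
    simpa [mem_coprimePolysDegreeLT, mem_polysDegreeLT, hmod G] using hG.symm
  · rintro ⟨A, B⟩ h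
    simp only [Finset.coe_product, Set.mem_prod, Finset.mem_coe, mem_coprimePolysDegreeLT,
      mem_polysDegreeLT] at h
    obtain ⟨⟨hA, hcop⟩, hB⟩ := h
    exact mem_coprimePolysDegreeLT.mpr ⟨(degree_add_mul_lt_natDegree_add_iff hN hA B k).mpr hB,
      IsCoprime.add_mul_left_right_iff.mpr hcop⟩
  · intro G _
    exact EuclideanDomain.mod_add_div G N
  · rintro ⟨A, B⟩ h
    simp only [Finset.coe_product, Set.mem_prod, Finset.mem_coe, mem_coprimePolysDegreeLT] at h
    have hA := hmod_add A B h.1.1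
    have hdiv := EuclideanDomain.mod_add_div (A + N * B) N
    rw [hA, add_right_inj] at hdiv
    exact Prod.ext hA (mul_left_cancel₀ hN hdiv)

end Counting

section MonicSums

/-- The monic polynomials of degree `≤ x` as a finite set. -/
noncomputable def monicsDegreeLE (R : Type*) [Semiring R] [Fintype R] (x : ℕ) : Finset R[X] :=
  (polysDegreeLT R (x + 1)).filter Monic

lemma mem_monicsDegreeLE {R : Type*} [Semiring R] [Nontrivial R] [Fintype R] {x : ℕ} {M : R[X]} :
    M ∈ monicsDegreeLE R x ↔ M.Monic ∧ M.natDegree ≤ x := by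
  rw [monicsDegreeLE, Finset.mem_filter, mem_polysDegreeLT, and_comm]
  refine and_congr_right fun hM => ?_
  rw [← natDegree_lt_iff_degree_lt hM.ne_zero, Nat.lt_succ_iff]

variable {R : Type*} [Ring R] [Nontrivial R] [Fintype R]

lemma card_filter_natDegree_eq_monicsDegreeLE {d x : ℕ} (hd : d ≤ x) :
    ((monicsDegreeLE R x).filter (natDegree · = d)).card = Fintype.card R ^ d := by
  have hmem (M : R[X]) : M ∈ (monicsDegreeLE R x).filter (natDegree · = d) ↔
      M.Monic ∧ M.natDegree = d := by
    rw [Finset.mem_filter, mem_monicsDegreeLE]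
    grind
  rw [← Nat.card_eq_finsetCard, Nat.card_congr ((Equiv.subtypeEquivRight hmem).trans
    ((monicEquivDegreeLT d).trans (degreeLTEquiv R d).toEquiv))]
  simp

variable (R) in
lemma sum_inv_card_pow_natDegree_monicsDegreeLE (x : ℕ) :
    ∑ M ∈ monicsDegreeLE R x, ((Fintype.card R : ℝ) ^ M.natDegree)⁻¹ = x + 1 := by
  have hmaps : ∀ M ∈ monicsDegreeLE R x, M.natDegree ∈ Finset.range (x + 1) := fun M hM =>
    Finset.mem_range_succ_iff.mpr (mem_monicsDegreeLE.mp hM).2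
  have hfiber : ∀ d ∈ Finset.range (x + 1), ∑ M ∈ (monicsDegreeLE R x).filter (natDegree · = d),
      ((Fintype.card R : ℝ) ^ M.natDegree)⁻¹ = 1 := by
    intro d hd
    rw [Finset.sum_congr rfl fun M hM => by rw [(Finset.mem_filter.mp hM).2], Finset.sum_const,
      card_filter_natDegree_eq_monicsDegreeLE (Finset.mem_range_succ_iff.mp hd), nsmul_eq_mul,
      Nat.cast_pow, mul_inv_cancel₀ (by positivity)]
  rw [← Finset.sum_fiberwise_of_maps_to hmaps, Finset.sum_congr rfl hfiber]
  simp

variable {F : Type*} [Field F] [Fintype F]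

lemma radical_mem_monicsDegreeLE {x : ℕ} {M : F[X]} (hM : M ∈ monicsDegreeLE F x) :
    radical M ∈ monicsDegreeLE F x := by
  rw [mem_monicsDegreeLE] at hM ⊢
  exact ⟨monic_radical M, (natDegree_le_of_dvd radical_dvd_self hM.1.ne_zero).trans hM.2⟩

lemma sum_ffPhi_mul_card_pow_le {N : F[X]} (hN : N ≠ 0) (x : ℕ) :
    ∑ M ∈ monicsDegreeLE F x with radical M = N, ffPhi N * Fintype.card F ^ (x - M.natDegree) ≤
      Fintype.card F ^ x := by
  let pairs : Finset (Σ _ : F[X], F[X]) := ((monicsDegreeLE F x).filter (radical · = N)).sigma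
    fun M => coprimePolysDegreeLT N (N.natDegree + (x - M.natDegree))
  have mem_pairs (M G : F[X]) : ⟨M, G⟩ ∈ pairs ↔ ((M.Monic ∧ M.natDegree ≤ x) ∧ radical M = N) ∧
      G.degree < (N.natDegree + (x - M.natDegree) : ℕ) ∧ IsCoprime N G := by
    rw [Finset.mem_sigma, Finset.mem_filter, mem_monicsDegreeLE, mem_coprimePolysDegreeLT]
  have hmaps : Set.MapsTo (fun p => p.1 * p.2) (pairs : Set (Σ _ : F[X], F[X]))
      ((polysDegreeLT F (N.natDegree + x)).filter (N ∣ ·)) := by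
    rintro ⟨M, G⟩ h
    obtain ⟨⟨⟨hM, hMx⟩, hrad⟩, hG, -⟩ := (mem_pairs M G).mp h
    have hdeg : N.natDegree + x = M.natDegree + (N.natDegree + (x - M.natDegree)) := by omega
    rw [Finset.mem_coe, Finset.mem_filter, mem_polysDegreeLT, hdeg,
      degree_mul_lt_natDegree_add_iff hM.ne_zero]
    exact ⟨hG, (hrad ▸ radical_dvd_self).mul_right G⟩
  have hinj : Set.InjOn (fun p => p.1 * p.2) (pairs : Set (Σ _ : F[X], F[X])) := by
    rintro ⟨M, G⟩ h ⟨M', G'⟩ h' heq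
    obtain ⟨⟨⟨hM, -⟩, rfl⟩, -, hG⟩ := (mem_pairs M G).mp h
    obtain ⟨⟨⟨hM', -⟩, hrad⟩, -, hG'⟩ := (mem_pairs M' G').mp h'
    obtain ⟨rfl, rfl⟩ := eq_and_eq_of_mul_eq_mul_of_radical_eq hM hM' hrad.symm hG hG' heq
    rfl
  calc ∑ M ∈ monicsDegreeLE F x with radical M = N, ffPhi N * Fintype.card F ^ (x - M.natDegree)
    _ = pairs.card := by
      rw [Finset.card_sigma]
      exact Finset.sum_congr rfl fun M _ => (card_coprimePolysDegreeLT_natDegree_add hN _).symm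
    _ ≤ ((polysDegreeLT F (N.natDegree + x)).filter (N ∣ ·)).card :=
      Finset.card_le_card_of_injOn _ hmaps hinj
    _ = Fintype.card F ^ x := card_filter_dvd_polysDegreeLT hN x

lemma sum_inv_card_pow_natDegree_radical_eq_le {N : F[X]} (hN : N ≠ 0) (x : ℕ) :
    ∑ M ∈ monicsDegreeLE F x with radical M = N, ((Fintype.card F : ℝ) ^ M.natDegree)⁻¹ ≤
      (ffPhi N : ℝ)⁻¹ := by
  have hφ : (0 : ℝ) < ffPhi N := by exact_mod_cast ffPhi_pos hN
  have hq : (0 : ℝ) < (Fintype.card F : ℝ) ^ x := by positivity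
  rw [← one_div, le_div_iff₀ hφ, ← mul_le_mul_iff_left₀ hq, one_mul]
  calc (∑ M ∈ monicsDegreeLE F x with radical M = N, ((Fintype.card F : ℝ) ^ M.natDegree)⁻¹) *
        ffPhi N * (Fintype.card F : ℝ) ^ x
    _ = ∑ M ∈ monicsDegreeLE F x with radical M = N,
        (ffPhi N : ℝ) * (Fintype.card F : ℝ) ^ (x - M.natDegree) := by
      rw [Finset.sum_mul, Finset.sum_mul]
      refine Finset.sum_congr rfl fun M hM => ?_
      rw [pow_sub₀ _ (by positivity) (mem_monicsDegreeLE.mp (Finset.mem_filter.mp hM).1).2]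
      ring
    _ ≤ (Fintype.card F : ℝ) ^ x := by exact_mod_cast sum_ffPhi_mul_card_pow_le hN x

lemma sum_inv_card_pow_natDegree_radical_eq_le_ffMu_sq_div {N : F[X]} (hN : N ≠ 0) (x : ℕ) :
    ∑ M ∈ monicsDegreeLE F x with radical M = N, ((Fintype.card F : ℝ) ^ M.natDegree)⁻¹ ≤
      (ffMu N : ℝ) ^ 2 / ffPhi N := by
  by_cases hsq : Squarefree N
  · have hμ : (ffMu N : ℝ) ^ 2 = 1 := by
      simp [ffMu, hsq, ← pow_mul, mul_comm _ 2]
    rw [hμ, one_div]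
    exact sum_inv_card_pow_natDegree_radical_eq_le hN x
  · have hempty : (monicsDegreeLE F x).filter (radical · = N) = ∅ :=
      Finset.filter_false_of_mem fun M _ (hrad : radical M = N) => hsq (hrad ▸ squarefree_radical)
    rw [hempty, Finset.sum_empty]
    positivity

end MonicSums

theorem sum_mu_sq_div_phi_lower_general {Fq : Type*} [Field Fq] [Finite Fq] (x : ℕ) :
    (x : ℝ) + 1 ≤ ∑ᶠ (N : Polynomial Fq) (_ : N.Monic ∧ N.natDegree ≤ x),
        ((ffMu N : ℝ)) ^ 2 / ffPhi N := by
  have := Fintype.ofFinite Fq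
  rw [finsum_cond_eq_sum_of_cond_iff _ fun _ => mem_monicsDegreeLE.symm]
  calc (x : ℝ) + 1
    _ = ∑ M ∈ monicsDegreeLE Fq x, ((Fintype.card Fq : ℝ) ^ M.natDegree)⁻¹ :=
      (sum_inv_card_pow_natDegree_monicsDegreeLE Fq x).symm
    _ = ∑ N ∈ monicsDegreeLE Fq x, ∑ M ∈ monicsDegreeLE Fq x with radical M = N,
        ((Fintype.card Fq : ℝ) ^ M.natDegree)⁻¹ :=
      (Finset.sum_fiberwise_of_maps_to (fun _ => radical_mem_monicsDegreeLE) _).symm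
    _ ≤ ∑ N ∈ monicsDegreeLE Fq x, (ffMu N : ℝ) ^ 2 / ffPhi N :=
      Finset.sum_le_sum fun _ hN => sum_inv_card_pow_natDegree_radical_eq_le_ffMu_sq_div
        (mem_monicsDegreeLE.mp hN).1.ne_zero x

/-- `∑_{N monic, deg N ≤ x} μ(N)²/φ(N) ≥ x`. -/
theorem sum_mu_sq_div_phi_lower {Fq : Type*} [Field Fq] [Fintype Fq] (x : ℕ) (hx : 1 ≤ x) :
    (x : ℝ) ≤ ∑ᶠ (N : Polynomial Fq) (_ : N.Monic ∧ N.natDegree ≤ x),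
        ((ffMu N : ℝ)) ^ 2 / ffPhi N := by
  exact (le_add_of_nonneg_right zero_le_one).trans (sum_mu_sq_div_phi_lower_general x)
end
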